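/- arXiv:2101.07108 — 2 statements merged into one kernel-verified Lean document; each statement's English description precedes it below -/
import Mathlib

section
/- Let (X_{n,θ})_{n∈ℕ, θ∈Θ} and (X_θ)_{θ∈Θ} be real-valued random variables on (Ω, F), and assume that (X_θ)_{θ∈Θ} is uniformly absolutely continuous with respect to a probability measure μ on ℝ with continuous cumulative distribution function (i.e. μ has no atoms). Then (X_{n,θ}) converges uniformly in distributionover Θ to (X_θ) if and only if lim_{n→∞} sup_{x∈ℝ} sup_{θ∈Θ} |P_θ(X_{n,θ} ≤ x) − P_θ(X_θ ≤ x)| = 0. -/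
open MeasureTheory ProbabilityTheory Filter
open scoped ENNReal NNReal RealInnerProductSpace

noncomputable section

/-- Bounded-Lipschitz distance between the laws of `U` and `V` under `μ`, i.e. the supremum of
`|E f(U) - E f(V)|` over functions `f` with values in `[-1, 1]` that are `1`-Lipschitz. -/
def dBL {Ω B : Type*} [MeasurableSpace Ω] [PseudoMetricSpace B]
    (μ : Measure Ω) (U V : Ω → B) : ℝ :=
  ⨆ f : {g : B → ℝ // LipschitzWith 1 g ∧ ∀ x, |g x| ≤ 1},
    |(∫ ω, f.1 (U ω) ∂μ) - ∫ ω, f.1 (V ω) ∂μ|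

/-- `(X_{n,θ})` converges uniformly in distribution over `Θ` to `(Xlim_θ)`. -/
def TendstoUnifInDist {Ω Θ B : Type*} [MeasurableSpace Ω] [PseudoMetricSpace B]
    (P : Θ → Measure Ω) (X : ℕ → Θ → Ω → B) (Xlim : Θ → Ω → B) : Prop :=
  Filter.Tendsto (fun n => ⨆ θ, dBL (P θ) (X n θ) (Xlim θ)) Filter.atTop (nhds 0)

/-- The family `(X_θ)` is uniformly absolutely continuous with respect to `μ`. -/
def UnifAbsCont {Ω Θ B : Type*} [MeasurableSpace Ω] [MeasurableSpace B]
    (P : Θ → Measure Ω) (X : Θ → Ω → B) (μ : Measure B) : Prop :=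
  ∀ ε : ℝ, 0 < ε → ∃ δ : ℝ, 0 < δ ∧ ∀ s : Set B, MeasurableSet s →
    μ s < ENNReal.ofReal δ → (⨆ θ, P θ (X θ ⁻¹' s)) < ENNReal.ofReal ε

open Topology in
lemma aux_small (μ : Measure ℝ) [IsProbabilityMeasure μ] (hμ : ∀ x : ℝ, μ {x} = 0)
    (δ : ℝ≥0∞) (hδ : 0 < δ) : ∃ η : ℝ, 0 < η ∧ η ≤ 1 ∧ ∀ x, μ (Set.Icc x (x + η)) < δ := by
  obtain ⟨K, hK, hKδ⟩ : ∃ K : Set ℝ, IsCompact K ∧ μ Kᶜ < δ := by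
    obtain ⟨K, -, hK, h⟩ := MeasurableSet.univ.exists_isCompact_sdiff_lt (μ := μ) (by simp) hδ.ne'
    exact ⟨K, hK, by simpa [Set.compl_eq_univ_sdiff] using h⟩
  have h1 : ∀ x : ℝ, ∃ r : ℝ, 0 < r ∧ μ (Metric.ball x r) < δ := by
    intro x
    obtain ⟨U, hxU, hU, hUδ⟩ := Set.exists_isOpen_lt_of_lt ({x} : Set ℝ) (μ := μ) δ (by rw [hμ]; exact hδ)
    obtain ⟨r, hr, hrU⟩ := Metric.isOpen_iff.1 hU x (hxU rfl)
    exact ⟨r, hr, (measure_mono hrU).trans_lt hUδ⟩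
  choose r hr hrδ using h1
  obtain ⟨η, hη, hL⟩ := lebesgue_number_lemma_of_metric hK
    (c := fun x : ℝ => Metric.ball x (r x)) (fun x => Metric.isOpen_ball)
    (fun x _ => Set.mem_iUnion.2 ⟨x, Metric.mem_ball_self (hr x)⟩)
  refine ⟨min 1 (η/2), by positivity, min_le_left _ _, fun x => ?_⟩
  have hm : min 1 (η/2) ≤ η/2 := min_le_right _ _
  by_cases h : ∃ y ∈ K, y ∈ Set.Icc x (x + min 1 (η/2))
  · obtain ⟨y, hyK, hy1, hy2⟩ := h
    obtain ⟨i, hi⟩ := hL y hyK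
    refine (measure_mono (Set.Subset.trans ?_ hi)).trans_lt (hrδ i)
    intro z hz
    rw [Metric.mem_ball, Real.dist_eq, abs_lt]
    constructor <;> linarith [hz.1, hz.2]
  · push Not at h
    exact (measure_mono (fun z hz hzK => h z hzK hz)).trans_lt hKδ

lemma aux_piece (ν : Measure ℝ) [IsProbabilityMeasure ν] (f : ℝ → ℝ) (hf : LipschitzWith 1 f)
    (hb : ∀ x, |f x| ≤ 1) (a h : ℝ) :
    |(∫ x in Set.Ioc a (a+h), f x ∂ν) - f a * ν.real (Set.Ioc a (a+h))|
      ≤ h * ν.real (Set.Ioc a (a+h)) := by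
  have hi : Integrable f ν := Integrable.of_bound hf.continuous.aestronglyMeasurable 1
    (Eventually.of_forall hb)
  have : (∫ x in Set.Ioc a (a+h), f x ∂ν) - f a * ν.real (Set.Ioc a (a+h))
      = ∫ x in Set.Ioc a (a+h), (f x - f a) ∂ν := by
    rw [integral_sub hi.integrableOn (integrable_const _)]
    simp [mul_comm]
  rw [this, ← Real.norm_eq_abs]
  apply norm_setIntegral_le_of_norm_le_const (measure_lt_top _ _)
  intro x hx
  have := hf.dist_le_mul x a
  simp only [NNReal.coe_one, one_mul, Real.dist_eq] at this
  rw [Real.norm_eq_abs]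
  refine this.trans ?_
  rw [abs_le]; constructor <;> linarith [hx.1, hx.2]

lemma aux_Ioc (ν : Measure ℝ) [IsProbabilityMeasure ν] (a b : ℝ) (hab : a ≤ b) :
    ν.real (Set.Ioc a b) = ν.real (Set.Iic b) - ν.real (Set.Iic a) := by
  rw [← Set.Iic_sdiff_Iic, measureReal_sdiff (Set.Iic_subset_Iic.2 hab) measurableSet_Iic]

lemma aux_sum (ν₁ ν₂ : Measure ℝ) [IsProbabilityMeasure ν₁] [IsProbabilityMeasure ν₂]
    (f : ℝ → ℝ) (hf : LipschitzWith 1 f)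
    (hb : ∀ x, |f x| ≤ 1) (a h D : ℝ) (hh : 0 ≤ h)
    (hD : ∀ x, |ν₁.real (Set.Iic x) - ν₂.real (Set.Iic x)| ≤ D) (N : ℕ) :
    |(∫ x in Set.Ioc a (a+N*h), f x ∂ν₁) - ∫ x in Set.Ioc a (a+N*h), f x ∂ν₂|
      ≤ h * (ν₁.real (Set.Ioc a (a+N*h)) + ν₂.real (Set.Ioc a (a+N*h))) + 2 * D * N := by
  have hi1 : Integrable f ν₁ := Integrable.of_bound hf.continuous.aestronglyMeasurable 1
    (Eventually.of_forall hb)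
  have hi2 : Integrable f ν₂ := Integrable.of_bound hf.continuous.aestronglyMeasurable 1
    (Eventually.of_forall hb)
  induction N with
  | zero => simp
  | succ N ih =>
    have hN : 0 ≤ N * h := by positivity
    have e : Set.Ioc a (a + (N+1:ℕ)*h) = Set.Ioc a (a+N*h) ∪ Set.Ioc (a+N*h) (a+N*h+h) := by
      rw [Set.Ioc_union_Ioc_eq_Ioc (by linarith) (by linarith)]
      push_cast; congr 1; ring
    have dj : Disjoint (Set.Ioc a (a+N*h)) (Set.Ioc (a+N*h) (a+N*h+h)) :=
      Set.Ioc_disjoint_Ioc_of_le le_rfl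
    rw [e, setIntegral_union dj measurableSet_Ioc hi1.integrableOn hi1.integrableOn,
      setIntegral_union dj measurableSet_Ioc hi2.integrableOn hi2.integrableOn,
      measureReal_union dj measurableSet_Ioc, measureReal_union dj measurableSet_Ioc]
    have p1 := aux_piece ν₁ f hf hb (a+N*h) h
    have p2 := aux_piece ν₂ f hf hb (a+N*h) h
    have q : |f (a+N*h) * ν₁.real (Set.Ioc (a+N*h) (a+N*h+h))
        - f (a+N*h) * ν₂.real (Set.Ioc (a+N*h) (a+N*h+h))| ≤ 2 * D := by
      rw [← mul_sub, abs_mul, aux_Ioc _ _ _ (by linarith), aux_Ioc _ _ _ (by linarith)]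
      have d1 := abs_le.1 (hD (a+N*h))
      have d2 := abs_le.1 (hD (a+N*h+h))
      refine (mul_le_of_le_one_left (abs_nonneg _) (hb _)).trans ?_
      rw [abs_le]; constructor <;> linarith [d1.1, d1.2, d2.1, d2.2]
    push_cast
    rw [abs_le] at *
    constructor <;> linarith [p1.1, p1.2, p2.1, p2.2, q.1, q.2, ih.1, ih.2]

lemma aux_bwd (ν₁ ν₂ : Measure ℝ) [IsProbabilityMeasure ν₁] [IsProbabilityMeasure ν₂]
    (f : ℝ → ℝ) (hf : LipschitzWith 1 f)
    (hb : ∀ x, |f x| ≤ 1) (a h D : ℝ) (hh : 0 ≤ h)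
    (hD : ∀ x, |ν₁.real (Set.Iic x) - ν₂.real (Set.Iic x)| ≤ D) (N : ℕ) :
    |(∫ x, f x ∂ν₁) - ∫ x, f x ∂ν₂|
      ≤ 2 * h + 2 * D * N + 2 * D + 2 * ν₂.real (Set.Ioc a (a+N*h))ᶜ := by
  have hi1 : Integrable f ν₁ := Integrable.of_bound hf.continuous.aestronglyMeasurable 1
    (Eventually.of_forall hb)
  have hi2 : Integrable f ν₂ := Integrable.of_bound hf.continuous.aestronglyMeasurable 1
    (Eventually.of_forall hb)
  have hN : 0 ≤ N * h := by positivity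
  have s := aux_sum ν₁ ν₂ f hf hb a h D hh hD N
  rw [← integral_add_compl (s := Set.Ioc a (a+N*h)) measurableSet_Ioc hi1,
    ← integral_add_compl (s := Set.Ioc a (a+N*h)) measurableSet_Ioc hi2]
  have t1 : |∫ x in (Set.Ioc a (a+N*h))ᶜ, f x ∂ν₁| ≤ 1 * ν₁.real (Set.Ioc a (a+N*h))ᶜ := by
    rw [← Real.norm_eq_abs]
    exact norm_setIntegral_le_of_norm_le_const (measure_lt_top _ _) (fun x _ => hb x)
  have t2 : |∫ x in (Set.Ioc a (a+N*h))ᶜ, f x ∂ν₂| ≤ 1 * ν₂.real (Set.Ioc a (a+N*h))ᶜ := by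
    rw [← Real.norm_eq_abs]
    exact norm_setIntegral_le_of_norm_le_const (measure_lt_top _ _) (fun x _ => hb x)
  have u1 := probReal_compl_eq_one_sub (μ := ν₁) (s := Set.Ioc a (a+N*h)) measurableSet_Ioc
  have u2 := probReal_compl_eq_one_sub (μ := ν₂) (s := Set.Ioc a (a+N*h)) measurableSet_Ioc
  have v1 := aux_Ioc ν₁ a (a+N*h) (by linarith)
  have v2 := aux_Ioc ν₂ a (a+N*h) (by linarith)
  have d1 := abs_le.1 (hD a)
  have d2 := abs_le.1 (hD (a+N*h))
  have w1 : h * (ν₁.real (Set.Ioc a (a+N*h)) + ν₂.real (Set.Ioc a (a+N*h))) ≤ h * 2 := by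
    apply mul_le_mul_of_nonneg_left _ hh
    linarith [measureReal_le_one (μ := ν₁) (s := Set.Ioc a (a+N*h)), measureReal_le_one (μ := ν₂) (s := Set.Ioc a (a+N*h))]
  rw [abs_le] at *
  constructor <;> linarith [d1.1, d1.2, d2.1, d2.2, s.1, s.2, t1.1, t1.2, t2.1, t2.2]

lemma aux_ramp (ν₁ ν₂ : Measure ℝ) [IsProbabilityMeasure ν₁] [IsProbabilityMeasure ν₂]
    (η d : ℝ) (hη : 0 < η) (hη1 : η ≤ 1)
    (hd : ∀ f : ℝ → ℝ, LipschitzWith 1 f → (∀ x, |f x| ≤ 1) →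
      |(∫ x, f x ∂ν₁) - ∫ x, f x ∂ν₂| ≤ d) (x : ℝ) :
    η * ν₁.real (Set.Iic x) ≤ η * ν₂.real (Set.Iic (x + η)) + d := by
  set f : ℝ → ℝ := fun t => max 0 (min η (x + η - t)) with hfdef
  have hf : LipschitzWith 1 f := by
    have h0 : LipschitzWith 1 (fun t : ℝ => x + η - t) := by
      apply LipschitzWith.of_dist_le_mul
      intro s t
      rw [Real.dist_eq, Real.dist_eq, NNReal.coe_one, one_mul, abs_sub_comm s t]
      exact le_of_eq (congrArg _ (by ring))
    exact (h0.const_min η).const_max 0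
  have hb0 : ∀ t, 0 ≤ f t := fun t => le_max_left _ _
  have hbη : ∀ t, f t ≤ η := fun t => max_le hη.le (min_le_left _ _)
  have hb : ∀ t, |f t| ≤ 1 := fun t => by
    rw [abs_of_nonneg (hb0 t)]; exact (hbη t).trans hη1
  have hi1 : Integrable f ν₁ := Integrable.of_bound hf.continuous.aestronglyMeasurable 1
    (Eventually.of_forall hb)
  have hi2 : Integrable f ν₂ := Integrable.of_bound hf.continuous.aestronglyMeasurable 1
    (Eventually.of_forall hb)
  have l1 : η * ν₁.real (Set.Iic x) ≤ ∫ t, f t ∂ν₁ := by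
    have : η * ν₁.real (Set.Iic x) = ∫ t, (Set.Iic x).indicator (fun _ => η) t ∂ν₁ := by
      rw [integral_indicator measurableSet_Iic]; simp [mul_comm]
    rw [this]
    apply integral_mono ((integrable_const η).indicator measurableSet_Iic) hi1
    intro t
    by_cases ht : t ∈ Set.Iic x
    · simp only [Set.indicator_of_mem ht, hfdef]
      have : t ≤ x := ht
      exact le_max_of_le_right (le_min le_rfl (by linarith))
    · simp only [Set.indicator_of_notMem ht]; exact hb0 t
  have l2 : ∫ t, f t ∂ν₂ ≤ η * ν₂.real (Set.Iic (x+η)) := by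
    have : η * ν₂.real (Set.Iic (x+η)) = ∫ t, (Set.Iic (x+η)).indicator (fun _ => η) t ∂ν₂ := by
      rw [integral_indicator measurableSet_Iic]; simp [mul_comm]
    rw [this]
    apply integral_mono hi2 ((integrable_const η).indicator measurableSet_Iic)
    intro t
    by_cases ht : t ∈ Set.Iic (x+η)
    · simp only [Set.indicator_of_mem ht]; exact hbη t
    · simp only [Set.indicator_of_notMem ht, hfdef]
      have : x + η < t := not_le.1 ht
      exact max_le le_rfl (min_le_of_right_le (by linarith))
  linarith [(abs_le.1 (hd f hf hb)).2]

lemma aux_fwd (ν₁ ν₂ : Measure ℝ) [IsProbabilityMeasure ν₁] [IsProbabilityMeasure ν₂]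
    (η d ε : ℝ) (hη : 0 < η) (hη1 : η ≤ 1)
    (hd : ∀ f : ℝ → ℝ, LipschitzWith 1 f → (∀ x, |f x| ≤ 1) →
      |(∫ x, f x ∂ν₁) - ∫ x, f x ∂ν₂| ≤ d)
    (hε : ∀ x, ν₂.real (Set.Icc x (x+η)) ≤ ε) (x : ℝ) :
    |ν₁.real (Set.Iic x) - ν₂.real (Set.Iic x)| ≤ ε + d / η := by
  have hc : ∀ y, ν₂.real (Set.Iic (y+η)) ≤ ν₂.real (Set.Iic y) + ε := fun y => by
    have := aux_Ioc ν₂ y (y+η) (by linarith)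
    have h2 : ν₂.real (Set.Ioc y (y+η)) ≤ ν₂.real (Set.Icc y (y+η)) :=
      measureReal_mono Set.Ioc_subset_Icc_self
    linarith [hε y]
  have r1 := aux_ramp ν₁ ν₂ η d hη hη1 hd x
  have r2 := aux_ramp ν₂ ν₁ η d hη hη1
    (fun f h1 h2 => by rw [abs_sub_comm]; exact hd f h1 h2) (x-η)
  have c1 := hc x
  have c2 := hc (x-η)
  rw [sub_add_cancel] at r2 c2
  have e : η * (d/η) = d := by field_simp
  rw [abs_le]
  constructor
  · have : ν₂.real (Set.Iic (x-η)) ≤ ν₁.real (Set.Iic x) + d/η := by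
      apply le_of_mul_le_mul_left _ hη
      rw [mul_add, e]; exact r2
    linarith
  · have : ν₁.real (Set.Iic x) ≤ ν₂.real (Set.Iic (x+η)) + d/η := by
      apply le_of_mul_le_mul_left _ hη
      rw [mul_add, e]; exact r1
    linarith

lemma aux_iff {ι : Type*} [Nonempty ι] {u : ℕ → ι → ℝ} (B : ℝ) (h0 : ∀ n i, 0 ≤ u n i)
    (hB : ∀ n i, u n i ≤ B) :
    Tendsto (fun n => ⨆ i, u n i) atTop (nhds 0) ↔
      ∀ ε > 0, ∀ᶠ n in atTop, ∀ i, u n i ≤ ε := by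
  have hbd : ∀ n, BddAbove (Set.range (u n)) := fun n => ⟨B, by rintro _ ⟨i, rfl⟩; exact hB n i⟩
  have hn : ∀ n, 0 ≤ ⨆ i, u n i := fun n => Real.iSup_nonneg (h0 n)
  rw [Metric.tendsto_nhds]
  constructor
  · intro h ε hε
    filter_upwards [h ε hε] with n hn' i
    rw [Real.dist_eq, sub_zero, abs_of_nonneg (hn n)] at hn'
    exact (le_ciSup (hbd n) i).trans hn'.le
  · intro h ε hε
    filter_upwards [h (ε/2) (by positivity)] with n hn'
    rw [Real.dist_eq, sub_zero, abs_of_nonneg (hn n)]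
    exact (ciSup_le hn').trans_lt (by linarith)

/-- Under uniform absolute continuity of the limits with respect to an atomless probability
measure, uniform convergence in distribution is equivalent to uniform convergence of the
distribution functions, uniformly in the argument. -/
theorem tendstoUnifInDist_iff_unif_cdf
    {Ω Θ : Type*} [MeasurableSpace Ω]
    (P : Θ → Measure Ω) (hP : ∀ θ, IsProbabilityMeasure (P θ))
    (X : ℕ → Θ → Ω → ℝ) (Xlim : Θ → Ω → ℝ)
    (hXmeas : ∀ n θ, Measurable (X n θ)) (hXlimmeas : ∀ θ, Measurable (Xlim θ))
    (μ : Measure ℝ) (hμ : IsProbabilityMeasure μ) (hμcont : ∀ x : ℝ, μ {x} = 0)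
    (hac : UnifAbsCont P Xlim μ) :
    TendstoUnifInDist P X Xlim ↔
      Filter.Tendsto (fun n => ⨆ x : ℝ, ⨆ θ,
          |((P θ) {ω | X n θ ω ≤ x}).toReal - ((P θ) {ω | Xlim θ ω ≤ x}).toReal|)
        Filter.atTop (nhds 0) := by
  rcases isEmpty_or_nonempty Θ with hΘ | hΘ
  · simp [TendstoUnifInDist]
  set ν : ℕ → Θ → Measure ℝ := fun n θ => (P θ).map (X n θ) with hν
  set ρ : Θ → Measure ℝ := fun θ => (P θ).map (Xlim θ) with hρ
  have hνp : ∀ n θ, IsProbabilityMeasure (ν n θ) := fun n θ =>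
    Measure.isProbabilityMeasure_map (hXmeas n θ).aemeasurable
  have hρp : ∀ θ, IsProbabilityMeasure (ρ θ) := fun θ =>
    Measure.isProbabilityMeasure_map (hXlimmeas θ).aemeasurable
  have hνI : ∀ n θ x, ((P θ) {ω | X n θ ω ≤ x}).toReal = (ν n θ).real (Set.Iic x) := by
    intro n θ x
    rw [measureReal_def, hν, Measure.map_apply (hXmeas n θ) measurableSet_Iic]; rfl
  have hρI : ∀ θ x, ((P θ) {ω | Xlim θ ω ≤ x}).toReal = (ρ θ).real (Set.Iic x) := by
    intro θ x
    rw [measureReal_def, hρ, Measure.map_apply (hXlimmeas θ) measurableSet_Iic]; rfl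
  have hνf : ∀ n θ (f : ℝ → ℝ), LipschitzWith 1 f →
      ∫ ω, f (X n θ ω) ∂(P θ) = ∫ x, f x ∂(ν n θ) := fun n θ f hf =>
    (integral_map (hXmeas n θ).aemeasurable hf.continuous.aestronglyMeasurable).symm
  have hρf : ∀ θ (f : ℝ → ℝ), LipschitzWith 1 f →
      ∫ ω, f (Xlim θ ω) ∂(P θ) = ∫ x, f x ∂(ρ θ) := fun θ f hf =>
    (integral_map (hXlimmeas θ).aemeasurable hf.continuous.aestronglyMeasurable).symm
  have hac' : ∀ ε : ℝ, 0 < ε → ∃ δ : ℝ, 0 < δ ∧ ∀ s : Set ℝ, MeasurableSet s →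
      μ s < ENNReal.ofReal δ → ∀ θ, (ρ θ).real s ≤ ε := by
    intro ε hε
    obtain ⟨δ, hδ, h⟩ := hac ε hε
    refine ⟨δ, hδ, fun s hs hsδ θ => ?_⟩
    have := (le_iSup (fun θ => P θ (Xlim θ ⁻¹' s)) θ).trans (h s hs hsδ).le
    rw [measureReal_def, hρ, Measure.map_apply (hXlimmeas θ) hs]
    exact ENNReal.toReal_le_of_le_ofReal hε.le this
  have hle2 : ∀ (κ : Measure ℝ) [IsProbabilityMeasure κ] (f : ℝ → ℝ), (∀ x, |f x| ≤ 1) →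
      |∫ x, f x ∂κ| ≤ 1 := by
    intro κ _ f hb
    have := norm_integral_le_of_norm_le_const (μ := κ) (f := f) (C := 1) (Eventually.of_forall hb)
    simpa using this
  have hterm : ∀ n θ (f : {g : ℝ → ℝ // LipschitzWith 1 g ∧ ∀ x, |g x| ≤ 1}),
      |(∫ ω, f.1 (X n θ ω) ∂(P θ)) - ∫ ω, f.1 (Xlim θ ω) ∂(P θ)| ≤ 2 := by
    intro n θ f
    rw [hνf n θ _ f.2.1, hρf θ _ f.2.1]
    have a1 := hle2 (ν n θ) f.1 f.2.2
    have a2 := hle2 (ρ θ) f.1 f.2.2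
    exact (abs_sub _ _).trans (by linarith)
  have hne : Nonempty {g : ℝ → ℝ // LipschitzWith 1 g ∧ ∀ x, |g x| ≤ 1} :=
    ⟨⟨fun _ => 0, LipschitzWith.const' 0, by simp⟩⟩
  have hL : TendstoUnifInDist P X Xlim ↔ ∀ ε > 0, ∀ᶠ n in atTop, ∀ θ (f : ℝ → ℝ),
      LipschitzWith 1 f → (∀ x, |f x| ≤ 1) →
      |(∫ x, f x ∂(ν n θ)) - ∫ x, f x ∂(ρ θ)| ≤ ε := by
    unfold TendstoUnifInDist
    rw [aux_iff (u := fun n θ => dBL (P θ) (X n θ) (Xlim θ)) 2 (fun n θ => Real.iSup_nonneg fun f => abs_nonneg _)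
      (fun n θ => ciSup_le (hterm n θ))]
    refine forall₂_congr fun ε hε => eventually_congr (Eventually.of_forall fun n =>
      forall_congr' fun θ => ?_)
    rw [dBL, ciSup_le_iff ⟨2, by rintro _ ⟨f, rfl⟩; exact hterm n θ f⟩]
    constructor
    · intro h f h1 h2
      rw [← hνf n θ _ h1, ← hρf θ _ h1]
      exact h ⟨f, h1, h2⟩
    · intro h f
      rw [hνf n θ _ f.2.1, hρf θ _ f.2.1]
      exact h f.1 f.2.1 f.2.2
  have hc1 : ∀ n θ x, |(ν n θ).real (Set.Iic x) - (ρ θ).real (Set.Iic x)| ≤ 1 := by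
    intro n θ x
    rw [abs_le]
    constructor <;> linarith [measureReal_le_one (μ := ν n θ) (s := Set.Iic x),
      measureReal_le_one (μ := ρ θ) (s := Set.Iic x),
      measureReal_nonneg (μ := ν n θ) (s := Set.Iic x),
      measureReal_nonneg (μ := ρ θ) (s := Set.Iic x)]
  simp only [hνI, hρI]
  rw [hL, aux_iff 1 (fun n x => Real.iSup_nonneg fun θ => abs_nonneg _)
      (fun n x => ciSup_le fun θ => hc1 n θ x)]
  have hR : ∀ n x ε, (⨆ θ, |(ν n θ).real (Set.Iic x) - (ρ θ).real (Set.Iic x)|) ≤ ε ↔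
      ∀ θ, |(ν n θ).real (Set.Iic x) - (ρ θ).real (Set.Iic x)| ≤ ε := fun n x ε =>
    ciSup_le_iff ⟨1, by rintro _ ⟨θ, rfl⟩; exact hc1 n θ x⟩
  simp only [hR]
  constructor
  · intro h ε hε
    obtain ⟨δ, hδ, hs⟩ := hac' (ε/2) (by positivity)
    obtain ⟨η, hη, hη1, hμη⟩ := aux_small μ hμcont (ENNReal.ofReal δ) (by simpa using hδ)
    filter_upwards [h (ε/2*η) (by positivity)] with n hn x θ
    have := aux_fwd (ν n θ) (ρ θ) η (ε/2*η) (ε/2) hη hη1 (hn θ)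
      (fun x => hs _ measurableSet_Icc (hμη x) θ) x
    have e : ε/2*η/η = ε/2 := by field_simp
    linarith
  · intro h ε hε
    obtain ⟨δ, hδ, hs⟩ := hac' (ε/8) (by positivity)
    obtain ⟨M, hM⟩ : ∃ M : ℕ, μ (Set.Ioc (-(M*(ε/8))) (-(M*(ε/8)) + (2*M:ℕ)*(ε/8)))ᶜ
        < ENNReal.ofReal δ := by
      obtain ⟨K, -, hK, hKδ⟩ := MeasurableSet.univ.exists_isCompact_sdiff_lt (μ := μ)
        (by simp) (ε := ENNReal.ofReal δ) (by simpa using hδ)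
      obtain ⟨R, hR⟩ := hK.isBounded.subset_ball 0
      obtain ⟨M, hM⟩ := exists_nat_ge (R / (ε/8))
      rw [div_le_iff₀ (by positivity)] at hM
      refine ⟨M, (measure_mono ?_).trans_lt hKδ⟩
      intro z hz
      refine ⟨trivial, fun hzK => hz ?_⟩
      have := hR hzK
      rw [mem_ball_zero_iff, Real.norm_eq_abs, abs_lt] at this
      push_cast
      constructor <;> linarith [this.1, this.2]
    set D := ε / (4 * (2 * M + 1)) with hD
    have hDp : 0 < D := by positivity
    filter_upwards [h D hDp] with n hn θ f hf hb
    have := aux_bwd (ν n θ) (ρ θ) f hf hb (-(M*(ε/8))) (ε/8) D (by positivity)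
      (fun x => hn x θ) (2*M)
    have h3 := hs _ measurableSet_Ioc.compl hM θ
    have e : 2 * D * (2*M:ℕ) + 2 * D = ε/2 := by
      rw [hD]; push_cast; field_simp; ring
    linarith
end
end

section
/- Let (X_{n,θ})_{n∈ℕ, θ∈Θ} and (X_θ)_{θ∈Θ} be random variables on (Ω, F) with values in a separable Banach space B. If (X_θ)_{θ∈Θ} is uniformly tight and (X_{n,θ}) converges uniformly in distribution over Θ to (X_θ), then (X_{n,θ})_{n∈ℕ, θ∈Θ} is sequentially tight. -/
open MeasureTheory ProbabilityTheory Filter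
open scoped ENNReal NNReal RealInnerProductSpace

noncomputable section

/-- The family `(X_θ)` is uniformly tight over `Θ`. -/
def UniformlyTight {Ω Θ B : Type*} [MeasurableSpace Ω] [TopologicalSpace B]
    (P : Θ → Measure Ω) (X : Θ → Ω → B) : Prop :=
  ∀ ε : ℝ, 0 < ε → ∃ K : Set B, IsCompact K ∧ (⨆ θ, P θ {ω | X θ ω ∉ K}) < ENNReal.ofReal ε

/-- The family `(X_{n,θ})` is sequentially tight: for every sequence `(θ_n)` in `Θ`, the
sequence of laws of `X_{n, θ_n}` under `P (θ_n)` is tight. -/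
def SeqTight {Ω Θ B : Type*} [MeasurableSpace Ω] [TopologicalSpace B]
    (P : Θ → Measure Ω) (X : ℕ → Θ → Ω → B) : Prop :=
  ∀ θs : ℕ → Θ, ∀ ε : ℝ, 0 < ε → ∃ K : Set B, IsCompact K ∧
    ∀ n, P (θs n) {ω | X n (θs n) ω ∉ K} < ENNReal.ofReal ε

theorem dBL_bound {Ω B : Type*} [MeasurableSpace Ω] [PseudoMetricSpace B]
    (μ : Measure Ω) [IsProbabilityMeasure μ] (U V : Ω → B)
    (f : {g : B → ℝ // LipschitzWith 1 g ∧ ∀ x, |g x| ≤ 1}) :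
    |(∫ ω, f.1 (U ω) ∂μ) - ∫ ω, f.1 (V ω) ∂μ| ≤ 2 := by
  have h : ∀ W : Ω → B, |∫ ω, f.1 (W ω) ∂μ| ≤ 1 := by
    intro W
    have := norm_integral_le_of_norm_le_const (μ := μ) (f := fun ω => f.1 (W ω)) (C := 1)
      (Eventually.of_forall fun ω => f.2.2 (W ω))
    simpa using this
  have h1 := abs_le.1 (h U)
  have h2 := abs_le.1 (h V)
  rw [abs_le]
  constructor <;> linarith

theorem le_dBL {Ω B : Type*} [MeasurableSpace Ω] [PseudoMetricSpace B]
    (μ : Measure Ω) [IsProbabilityMeasure μ] (U V : Ω → B)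
    (f : {g : B → ℝ // LipschitzWith 1 g ∧ ∀ x, |g x| ≤ 1}) :
    |(∫ ω, f.1 (U ω) ∂μ) - ∫ ω, f.1 (V ω) ∂μ| ≤ dBL μ U V := by
  refine le_ciSup (f := fun f : {g : B → ℝ // LipschitzWith 1 g ∧ ∀ x, |g x| ≤ 1} =>
    |(∫ ω, f.1 (U ω) ∂μ) - ∫ ω, f.1 (V ω) ∂μ|) ⟨2, ?_⟩ f
  rintro _ ⟨g, rfl⟩
  exact dBL_bound μ U V g

theorem dBL_le_two {Ω B : Type*} [MeasurableSpace Ω] [PseudoMetricSpace B]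
    (μ : Measure Ω) [IsProbabilityMeasure μ] (U V : Ω → B) : dBL μ U V ≤ 2 :=
  Real.iSup_le (fun f => dBL_bound μ U V f) (by norm_num)

theorem key_bound {Ω B : Type*} [MeasurableSpace Ω] [PseudoMetricSpace B]
    [T2Space B] [MeasurableSpace B] [BorelSpace B]
    (μ : Measure Ω) [IsProbabilityMeasure μ] (U V : Ω → B) (hU : Measurable U)
    (hV : Measurable V) (K : Set B) (hK : IsCompact K) (η : ℝ) (h0 : 0 < η) (h1 : η ≤ 1) :
    η * μ.real {ω | η ≤ Metric.infDist (U ω) K} ≤ η * μ.real {ω | V ω ∉ K} + dBL μ U V := by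
  have hlip : LipschitzWith 1 (fun x => min η (Metric.infDist x K)) :=
    (Metric.lipschitz_infDist_pt K).const_min η
  have hnn : ∀ x, 0 ≤ min η (Metric.infDist x K) := fun x => le_min h0.le Metric.infDist_nonneg
  have hab : ∀ x, |min η (Metric.infDist x K)| ≤ 1 := fun x => by
    rw [abs_of_nonneg (hnn x)]; exact (min_le_left _ _).trans h1
  have hint : ∀ W : Ω → B, Measurable W →
      Integrable (fun ω => min η (Metric.infDist (W ω) K)) μ := fun W hW =>
    Integrable.of_bound (C := 1)
      ((hlip.continuous.measurable.comp hW).aestronglyMeasurable)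
      (Eventually.of_forall fun ω => hab _)
  have hd := le_dBL μ U V ⟨fun x => min η (Metric.infDist x K), hlip, hab⟩
  have hd' := (abs_le.1 hd).2
  have hm := mul_meas_ge_le_integral_of_nonneg (μ := μ)
    (Eventually.of_forall fun ω => hnn (U ω)) (hint U hU) η
  have hset : {ω | η ≤ min η (Metric.infDist (U ω) K)} = {ω | η ≤ Metric.infDist (U ω) K} := by
    ext ω; simp
  rw [hset] at hm
  have hKm : MeasurableSet {ω | V ω ∉ K} := hV hK.isClosed.measurableSet.compl
  have hv : ∫ ω, min η (Metric.infDist (V ω) K) ∂μ ≤ η * μ.real {ω | V ω ∉ K} := by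
    have : ∫ ω, min η (Metric.infDist (V ω) K) ∂μ
        ≤ ∫ ω, Set.indicator {ω | V ω ∉ K} (fun _ => η) ω ∂μ := by
      refine integral_mono (hint V hV) ((integrable_const η).indicator hKm) fun ω => ?_
      by_cases h : V ω ∈ K
      · simp [h, Metric.infDist_zero_of_mem h, h0.le]
      · simp [h]
    rw [integral_indicator_const _ hKm] at this
    simpa [mul_comm] using this
  simp only at hd'
  linarith

theorem exists_compact_near
    {Ω Θ B : Type*} [MeasurableSpace Ω]
    [NormedAddCommGroup B] [CompleteSpace B]
    [TopologicalSpace.SeparableSpace B] [MeasurableSpace B] [BorelSpace B]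
    (P : Θ → Measure Ω) (hP : ∀ θ, IsProbabilityMeasure (P θ))
    (X : ℕ → Θ → Ω → B) (Xlim : Θ → Ω → B)
    (hXmeas : ∀ n θ, Measurable (X n θ)) (hXlimmeas : ∀ θ, Measurable (Xlim θ))
    (htight : UniformlyTight P Xlim)
    (hconv : TendstoUnifInDist P X Xlim) (θs : ℕ → Θ)
    (η : ℝ) (h0 : 0 < η) (h1 : η ≤ 1) (δ : ℝ) (hδ : 0 < δ) :
    ∃ C : Set B, IsCompact C ∧ C.Nonempty ∧
      ∀ n, P (θs n) {ω | η ≤ Metric.infDist (X n (θs n) ω) C} ≤ ENNReal.ofReal δ := by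
  have : SecondCountableTopology B := UniformSpace.secondCountable_of_separable B
  obtain ⟨K, hK, hKt⟩ := htight (δ / 2) (by positivity)
  have hev : ∀ᶠ n in atTop, (⨆ θ, dBL (P θ) (X n θ) (Xlim θ)) < η * (δ / 2) :=
    (tendsto_order.1 hconv).2 _ (by positivity)
  obtain ⟨N, hN⟩ := eventually_atTop.1 hev
  have hul : ∀ n, ∃ L : Set B, IsCompact L ∧
      P (θs n) {ω | X n (θs n) ω ∉ L} ≤ ENNReal.ofReal δ := by
    intro n
    have hp := Measure.isProbabilityMeasure_map (μ := P (θs n)) (hXmeas n (θs n)).aemeasurable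
    have ht : IsTightMeasureSet {(P (θs n)).map (X n (θs n))} := isTightMeasureSet_singleton
    rw [isTightMeasureSet_iff_exists_isCompact_measure_compl_le] at ht
    obtain ⟨L, hL, hLt⟩ := ht (ENNReal.ofReal δ) (by simpa using hδ)
    refine ⟨L, hL, ?_⟩
    have := hLt _ rfl
    rwa [Measure.map_apply (hXmeas n (θs n)) hL.isClosed.measurableSet.compl] at this
  choose L hL hLt using hul
  have hK' : IsCompact (insert 0 K) := hK.insert 0
  refine ⟨insert 0 K ∪ ⋃ n ∈ Finset.range N, L n,
    hK'.union ((Finset.range N).isCompact_biUnion fun n _ => hL n), ⟨0, by simp⟩, fun n => ?_⟩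
  by_cases hn : n < N
  · refine (measure_mono ?_).trans (hLt n)
    intro ω hω hmem
    have hz : X n (θs n) ω ∈ insert 0 K ∪ ⋃ n ∈ Finset.range N, L n := by
      right
      simp only [Set.mem_iUnion]
      exact ⟨n, Finset.mem_range.2 hn, hmem⟩
    have : η ≤ 0 := le_trans hω (Metric.infDist_zero_of_mem hz).le
    linarith
  · have hkey := key_bound (P (θs n)) (X n (θs n)) (Xlim (θs n)) (hXmeas _ _) (hXlimmeas _)
      (insert 0 K) hK' η h0 h1
    have hd : dBL (P (θs n)) (X n (θs n)) (Xlim (θs n)) < η * (δ / 2) := by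
      refine lt_of_le_of_lt ?_ (hN n (not_lt.1 hn))
      refine le_ciSup (f := fun θ => dBL (P θ) (X n θ) (Xlim θ)) ⟨2, ?_⟩ (θs n)
      rintro _ ⟨θ, rfl⟩
      exact dBL_le_two _ _ _
    have hp : (P (θs n)).real {ω | Xlim (θs n) ω ∉ insert 0 K} ≤ δ / 2 := by
      refine ENNReal.toReal_le_of_le_ofReal (by positivity) ?_
      refine le_trans (measure_mono ?_)
        ((le_iSup (fun θ => P θ {ω | Xlim θ ω ∉ K}) (θs n)).trans hKt.le)
      intro ω hω hmem
      exact hω (Set.mem_insert_of_mem _ hmem)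
    have hfin : (P (θs n)).real {ω | η ≤ Metric.infDist (X n (θs n) ω) (insert 0 K)} ≤ δ := by
      have := mul_le_mul_of_nonneg_left hp h0.le
      refine le_of_mul_le_mul_left ?_ h0
      linarith
    refine (measure_mono ?_).trans ((ENNReal.le_ofReal_iff_toReal_le (measure_ne_top _ _) hδ.le).2 hfin)
    intro ω hω
    exact le_trans hω (Metric.infDist_le_infDist_of_subset Set.subset_union_left ⟨0, by simp⟩)

/-- If the family of limits is uniformly tight and `(X_{n,θ})` converges uniformly in
distribution to it, then `(X_{n,θ})` is sequentially tight. -/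
theorem seqTight_of_tendstoUnifInDist
    {Ω Θ B : Type*} [MeasurableSpace Ω]
    [NormedAddCommGroup B] [NormedSpace ℝ B] [CompleteSpace B]
    [TopologicalSpace.SeparableSpace B] [MeasurableSpace B] [BorelSpace B]
    (P : Θ → Measure Ω) (hP : ∀ θ, IsProbabilityMeasure (P θ))
    (X : ℕ → Θ → Ω → B) (Xlim : Θ → Ω → B)
    (hXmeas : ∀ n θ, Measurable (X n θ)) (hXlimmeas : ∀ θ, Measurable (Xlim θ))
    (htight : UniformlyTight P Xlim)
    (hconv : TendstoUnifInDist P X Xlim) :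
    SeqTight P X := by
  intro θs ε hε
  obtain ⟨δ, hδ, hsum⟩ := ENNReal.exists_pos_sum_of_countable
    (ε := ENNReal.ofReal ε) (by simpa using hε) ℕ
  have hη : ∀ k : ℕ, (0 : ℝ) < 1 / ((k : ℝ) + 1) := fun k => Nat.one_div_pos_of_nat
  have hη1 : ∀ k : ℕ, 1 / ((k : ℝ) + 1) ≤ 1 := fun k => by
    rw [div_le_one (by positivity)]
    have : (0 : ℝ) ≤ k := Nat.cast_nonneg k
    linarith
  choose C hC hne hCt using fun k : ℕ => exists_compact_near P hP X Xlim hXmeas hXlimmeas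
    htight hconv θs (1 / ((k : ℝ) + 1)) (hη k) (hη1 k) (δ k) (hδ k)
  refine ⟨⋂ k : ℕ, {x | Metric.infDist x (C k) ≤ 1 / ((k : ℝ) + 1)}, ?_, fun n => ?_⟩
  · refine isCompact_iff_totallyBounded_isComplete.2 ⟨?_, IsClosed.isComplete ?_⟩
    · rw [Metric.totallyBounded_iff]
      intro r hr
      obtain ⟨k, hk⟩ := exists_nat_one_div_lt (half_pos hr)
      obtain ⟨t, -, ht, hcov⟩ := finite_cover_balls_of_compact (hC k) (half_pos hr)
      refine ⟨t, ht, fun x hx => ?_⟩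
      have hxk : Metric.infDist x (C k) < r / 2 := lt_of_le_of_lt (Set.mem_iInter.1 hx k) hk
      obtain ⟨y, hy, hxy⟩ := (Metric.infDist_lt_iff (hne k)).1 hxk
      obtain ⟨z, hz, hyz⟩ := Set.mem_iUnion₂.1 (hcov hy)
      refine Set.mem_iUnion₂.2 ⟨z, hz, ?_⟩
      rw [Metric.mem_ball] at hyz ⊢
      linarith [dist_triangle x y z]
    · exact isClosed_iInter fun k => isClosed_le (Metric.continuous_infDist_pt _) continuous_const
  · refine lt_of_le_of_lt ?_ hsum
    refine le_trans (le_trans (measure_mono ?_) (measure_iUnion_le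
      (fun k : ℕ => {ω | 1 / ((k : ℝ) + 1) ≤ Metric.infDist (X n (θs n) ω) (C k)})))
      (ENNReal.tsum_le_tsum fun k => ?_)
    · intro ω hω
      simp only [Set.mem_ofPred_eq, Set.mem_iInter, not_forall, not_le] at hω
      obtain ⟨k, hk⟩ := hω
      exact Set.mem_iUnion.2 ⟨k, hk.le⟩
    · simpa using hCt k n
end
end
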